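/- Let H be a real inner product space, V a linear subspace of H equipped with a norm ‖·‖_V, and B : V × V → H a bilinear map such that for all u, v ∈ V: (i) ⟨B(u,v), v⟩ = 0, and (ii) ⟨B(u,v), u⟩ ≤ C ‖u‖_H ‖u‖_V ‖v‖_V for a fixed constant C ≥ 0, where ‖·‖_H is the inner-product norm of H. Then for all u, v ∈ V the local monotonicity estimate holds: ⟨B(u,u) − B(v,v), u − v⟩ ≤ C ‖u−v‖_H ‖u−v‖_V ‖v‖_V. -/

import Mathlib

open scoped InnerProductSpace

/-- Local monotonicity estimate (2.4) for the abstract bilinear convection term `B`: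
`V` is a linear subspace of `H` (realized as an injective linear map `ι : V →ₗ[ℝ] H`)
equipped with its own norm; if `⟨B(u,v), v⟩ = 0` and
`⟨B(u,v), u⟩ ≤ C ‖u‖_H ‖u‖_V ‖v‖_V`, then
`⟨B(u,u) − B(v,v), u − v⟩ ≤ C ‖u−v‖_H ‖u−v‖_V ‖v‖_V`. -/
theorem stmt1 {H V : Type*} [NormedAddCommGroup H] [InnerProductSpace ℝ H]
    [NormedAddCommGroup V] [NormedSpace ℝ V]
    (ι : V →ₗ[ℝ] H) (hι : Function.Injective ι)
    (B : V →ₗ[ℝ] V →ₗ[ℝ] H) (C : ℝ) (hC : 0 ≤ C)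
    (hB0 : ∀ u v : V, ⟪B u v, ι v⟫_ℝ = 0)
    (hB1 : ∀ u v : V, ⟪B u v, ι u⟫_ℝ ≤ C * ‖ι u‖ * ‖u‖ * ‖v‖)
    (u v : V) :
    ⟪B u u - B v v, ι u - ι v⟫_ℝ ≤ C * ‖ι (u - v)‖ * ‖u - v‖ * ‖v‖ := by
  have h : B u u - B v v = B u (u - v) + B (u - v) v := by
    simp only [map_sub, LinearMap.sub_apply]
    abel
  rw [h, ← map_sub ι, inner_add_left, hB0, zero_add]
  exact hB1 (u - v) v
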